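/- Let Y be a CAT(0) space, E : Y → ℝ ∪ {+∞} a λ-convex and lower semicontinuous functional with D(E) nonempty, λ ∈ ℝ, let y ∈ D(|∂⁻E|) and let (y_t)_{t>0} be the gradient flow trajectory for E starting from y. Then for every h > 0 it holds d(y, y_h) ≤ |∂⁻E|(y)·∫_0^h e^{−λt} dt. -/

import Mathlib

open Filter MeasureTheory Set Bornology
open scoped ENNReal Topology NNReal

/-- A (constant-speed, minimizing) geodesic defined on `[0,1]`:
`d(γ_s, γ_t) = |s - t| * d(γ_0, γ_1)` for all `s, t ∈ [0,1]`. -/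
def IsGeodesic {Y : Type*} [MetricSpace Y] (γ : ℝ → Y) : Prop :=
  ∀ s ∈ Set.Icc (0:ℝ) 1, ∀ t ∈ Set.Icc (0:ℝ) 1,
    dist (γ s) (γ t) = |s - t| * dist (γ 0) (γ 1)

/-- A metric space is geodesic if every two points are joined by a geodesic. -/
def GeodesicSpace (Y : Type*) [MetricSpace Y] : Prop :=
  ∀ x y : Y, ∃ γ : ℝ → Y, IsGeodesic γ ∧ γ 0 = x ∧ γ 1 = y

/-- The CAT(0) condition: geodesic space satisfying the comparison inequality
`d²(γ_t, a) ≤ (1-t)·d²(γ_0, a) + t·d²(γ_1, a) − t(1-t)·d²(γ_0, γ_1)`.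
(Completeness is required separately as a typeclass assumption.) -/
def Cat0 (Y : Type*) [MetricSpace Y] : Prop :=
  GeodesicSpace Y ∧
    ∀ γ : ℝ → Y, IsGeodesic γ → ∀ a : Y, ∀ t ∈ Set.Icc (0:ℝ) 1,
      dist (γ t) a ^ 2 ≤ (1 - t) * dist (γ 0) a ^ 2 + t * dist (γ 1) a ^ 2
        - t * (1 - t) * dist (γ 0) (γ 1) ^ 2

/-- A subset is geodesically convex if every geodesic joining two of its points
lies entirely inside it. -/
def GeodesicConvex {Y : Type*} [MetricSpace Y] (C : Set Y) : Prop :=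
  ∀ γ : ℝ → Y, IsGeodesic γ → γ 0 ∈ C → γ 1 ∈ C → ∀ t ∈ Set.Icc (0:ℝ) 1, γ t ∈ C

/-- `lam`-convexity along geodesics of an extended-real-valued functional:
`E(γ_t) ≤ (1-t)E(γ_0) + tE(γ_1) − (lam/2)t(1−t)d²(γ_0,γ_1)`. -/
def LamConvex {Y : Type*} [MetricSpace Y] (lam : ℝ) (E : Y → EReal) : Prop :=
  ∀ γ : ℝ → Y, IsGeodesic γ → ∀ t ∈ Set.Icc (0:ℝ) 1,
    E (γ t) ≤ ((1 - t : ℝ) : EReal) * E (γ 0) + ((t : ℝ) : EReal) * E (γ 1)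
      - ((lam / 2 * t * (1 - t) * dist (γ 0) (γ 1) ^ 2 : ℝ) : EReal)

/-- The descending slope `|∂⁻E|(y) = limsup_{z→y} (E(y)−E(z))⁺ / d(y,z)`,
set to `∞` outside the domain `{E < ∞}` of `E`. -/
noncomputable def descendingSlope {Y : Type*} [MetricSpace Y] (E : Y → EReal) (y : Y) :
    ℝ≥0∞ :=
  if E y = ⊤ then ⊤
  else Filter.limsup (fun z => ENNReal.ofReal ((E y - E z).toReal / dist y z))
      (nhdsWithin y {y}ᶜ)

/-- `ω(y; (y_n)) := limsup_n d(y, y_n)²`. -/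
noncomputable def asymptoticRadius {Y : Type*} [MetricSpace Y] (yn : ℕ → Y) (y : Y) : ℝ :=
  Filter.limsup (fun n => dist y (yn n) ^ 2) Filter.atTop

/-- Weak convergence of a bounded sequence: `y` is an asymptotic center
(i.e. a minimizer of `ω(·; ·)`) of every subsequence. -/
def WeakConv {Y : Type*} [MetricSpace Y] (yn : ℕ → Y) (y : Y) : Prop :=
  Bornology.IsBounded (Set.range yn) ∧
    ∀ φ : ℕ → ℕ, StrictMono φ →
      ∀ z : Y, asymptoticRadius (yn ∘ φ) y ≤ asymptoticRadius (yn ∘ φ) z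

/-- Absolute continuity on a set `I ⊆ ℝ`: there is a nonnegative integrable `g`
with `d(y_s, y_t) ≤ ∫_s^t g` for `s ≤ t` in `I`. -/
def AbsContOnSet {Y : Type*} [MetricSpace Y] (y : ℝ → Y) (I : Set ℝ) : Prop :=
  ∃ g : ℝ → ℝ, (∀ t, 0 ≤ g t) ∧ MeasureTheory.IntegrableOn g I ∧
    ∀ s ∈ I, ∀ t ∈ I, s ≤ t → dist (y s) (y t) ≤ ∫ r in s..t, g r

/-- Absolute continuity on the interval `[a,b]`. -/
def AbsContOn {Y : Type*} [MetricSpace Y] (y : ℝ → Y) (a b : ℝ) : Prop :=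
  AbsContOnSet y (Set.Icc a b)

/-- Local absolute continuity on `(0,∞)`. -/
def LocAbsCont {Y : Type*} [MetricSpace Y] (y : ℝ → Y) : Prop :=
  ∀ a b : ℝ, 0 < a → a ≤ b → AbsContOn y a b

/-- The Evolution Variational Inequality: for every `z`, for a.e. `t > 0` the
derivative of `t ↦ ½ d²(y_t, z)` exists and
`(d/dt)(½d²(y_t,z)) + E(y_t) + (lam/2)d²(y_t,z) ≤ E(z)`. -/
def EVI {Y : Type*} [MetricSpace Y] (lam : ℝ) (E : Y → EReal) (y : ℝ → Y) : Prop :=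
  ∀ z : Y, ∀ᵐ t ∂(MeasureTheory.volume.restrict (Set.Ioi (0:ℝ))),
    ∃ d' : ℝ, HasDerivAt (fun s => dist (y s) z ^ 2 / 2) d' t ∧
      (d' : EReal) + E (y t) + ((lam / 2 * dist (y t) z ^ 2 : ℝ) : EReal) ≤ E z

/-- A gradient flow trajectory for `E` starting from `y₀`: a locally absolutely
continuous curve on `(0,∞)` converging to `y₀` at `0` and satisfying the EVI. -/
def GradientFlow {Y : Type*} [MetricSpace Y] (lam : ℝ) (E : Y → EReal) (y₀ : Y)
    (y : ℝ → Y) : Prop :=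
  LocAbsCont y ∧ Filter.Tendsto y (nhdsWithin 0 (Set.Ioi 0)) (nhds y₀) ∧ EVI lam E y

/-- A map whose increments are dominated by those of an absolutely continuous map is absolutely
continuous. -/
theorem AbsolutelyContinuousOnInterval.of_dist_le {X Z : Type*} [PseudoMetricSpace X]
    [PseudoMetricSpace Z] {f : ℝ → X} {G : ℝ → Z} {a b : ℝ}
    (hG : AbsolutelyContinuousOnInterval G a b)
    (hfG : ∀ s ∈ uIcc a b, ∀ t ∈ uIcc a b, dist (f s) (f t) ≤ dist (G s) (G t)) :
    AbsolutelyContinuousOnInterval f a b := by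
  rw [absolutelyContinuousOnInterval_iff] at hG ⊢
  intro ε hε
  obtain ⟨δ, hδ, H⟩ := hG ε hε
  refine ⟨δ, hδ, fun I hI hlt => (Finset.sum_le_sum fun i hi => ?_).trans_lt (H I hI hlt)⟩
  exact hfG _ (hI.1 i hi).1 _ (hI.1 i hi).2

theorem AbsContOn.absolutelyContinuousOnInterval {Y : Type*} [MetricSpace Y] {y : ℝ → Y}
    {a b : ℝ} (hab : a ≤ b) (hy : AbsContOn y a b) : AbsolutelyContinuousOnInterval y a b := by
  obtain ⟨g, -, hgi, hyg⟩ := hy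
  have hgi' : IntervalIntegrable g volume a b :=
    (intervalIntegrable_iff_integrableOn_Icc_of_le hab).2 hgi
  refine (hgi'.absolutelyContinuousOnInterval_intervalIntegral left_mem_uIcc).of_dist_le ?_
  have key : ∀ s ∈ uIcc a b, ∀ t ∈ uIcc a b, s ≤ t →
      dist (y s) (y t) ≤ dist (∫ v in a..s, g v) (∫ v in a..t, g v) := by
    intro s hs t ht hst
    have hsub : ∀ r ∈ uIcc a b, IntervalIntegrable g volume a r := fun r hr =>
      hgi'.mono_set (uIcc_subset_uIcc left_mem_uIcc hr)
    rw [dist_comm (∫ v in a..s, g v), Real.dist_eq,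
      intervalIntegral.integral_interval_sub_left (hsub t ht) (hsub s hs)]
    rw [uIcc_of_le hab] at hs ht
    exact (hyg s hs t ht hst).trans (le_abs_self _)
  intro s hs t ht
  rcases le_total s t with hst | hts
  · exact key s hs t ht hst
  · rw [dist_comm, dist_comm (∫ v in a..s, g v)]
    exact key t ht s hs hts

/-- Along a geodesic issuing from `y`, `lam`-convexity bounds the difference quotients of `E` at
`y` from below. -/
theorem LamConvex.le_sub_div_dist {Y : Type*} [MetricSpace Y] {lam : ℝ} {E : Y → EReal}
    (hconv : LamConvex lam E) (hbot : ∀ y, E y ≠ ⊥) {γ : ℝ → Y} (hγ : IsGeodesic γ)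
    (h0 : E (γ 0) ≠ ⊤) (h1 : E (γ 1) ≠ ⊤) (hne : γ 0 ≠ γ 1) {t : ℝ} (ht : t ∈ Ioc (0 : ℝ) 1) :
    ((E (γ 0)).toReal - (E (γ 1)).toReal) / dist (γ 0) (γ 1)
        + lam / 2 * (1 - t) * dist (γ 0) (γ 1)
      ≤ (E (γ 0) - E (γ t)).toReal / dist (γ 0) (γ t) := by
  have hc := hconv γ hγ t ⟨ht.1.le, ht.2⟩
  have hD : 0 < dist (γ 0) (γ 1) := dist_pos.2 hne
  have hdt : dist (γ 0) (γ t) = t * dist (γ 0) (γ 1) := by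
    rw [hγ 0 (by simp) t ⟨ht.1.le, ht.2⟩, zero_sub, abs_neg, abs_of_pos ht.1]
  rw [← EReal.coe_toReal h0 (hbot _), ← EReal.coe_toReal h1 (hbot _)] at hc
  norm_cast at hc
  have htop : E (γ t) ≠ ⊤ := fun h => EReal.coe_ne_top _ (top_le_iff.1 (h ▸ hc))
  rw [← EReal.coe_toReal htop (hbot _), EReal.coe_le_coe_iff] at hc
  rw [EReal.toReal_sub h0 (hbot _) htop (hbot _), hdt, le_div_iff₀ (mul_pos ht.1 hD)]
  have : (((E (γ 0)).toReal - (E (γ 1)).toReal) / dist (γ 0) (γ 1)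
      + lam / 2 * (1 - t) * dist (γ 0) (γ 1)) * (t * dist (γ 0) (γ 1))
      = t * ((E (γ 0)).toReal - (E (γ 1)).toReal)
        + lam / 2 * t * (1 - t) * dist (γ 0) (γ 1) ^ 2 := by
    field_simp
  linarith

/-- For a `lam`-convex functional the descending slope controls the decrease of `E` globally. -/
theorem LamConvex.sub_le_descendingSlope {Y : Type*} [MetricSpace Y] (hgeo : GeodesicSpace Y)
    {lam : ℝ} {E : Y → EReal} (hconv : LamConvex lam E) (hbot : ∀ y, E y ≠ ⊥) {y z : Y}
    (hsl : descendingSlope E y ≠ ⊤) (hz : E z ≠ ⊤) :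
    (E y).toReal - (E z).toReal
      ≤ (descendingSlope E y).toReal * dist y z - lam / 2 * dist y z ^ 2 := by
  have hy : E y ≠ ⊤ := fun h => hsl (by simp [descendingSlope, h])
  rcases eq_or_ne y z with rfl | hyz
  · simp
  obtain ⟨γ, hγ, rfl, rfl⟩ := hgeo y z
  have hD : 0 < dist (γ 0) (γ 1) := dist_pos.2 hyz
  suffices H : ((E (γ 0)).toReal - (E (γ 1)).toReal) / dist (γ 0) (γ 1)
      + lam / 2 * dist (γ 0) (γ 1) ≤ (descendingSlope E (γ 0)).toReal by
    have := mul_le_mul_of_nonneg_right H hD.le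
    rw [add_mul, div_mul_cancel₀ _ hD.ne'] at this
    linarith
  refine le_of_forall_gt_imp_ge_of_dense fun c hcS => ?_
  have hc : 0 < c := ENNReal.toReal_nonneg.trans_lt hcS
  have hlt : descendingSlope E (γ 0) < ENNReal.ofReal c :=
    (ENNReal.lt_ofReal_iff_toReal_lt hsl).2 hcS
  rw [descendingSlope, if_neg hy] at hlt
  have hγlim : Tendsto γ (𝓝[>] 0) (𝓝[{γ 0}ᶜ] (γ 0)) := by
    have hdist : ∀ t ∈ Ioc (0 : ℝ) 1, dist (γ t) (γ 0) = t * dist (γ 0) (γ 1) := fun t ht => by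
      rw [hγ t ⟨ht.1.le, ht.2⟩ 0 (by simp), sub_zero, abs_of_pos ht.1]
    refine tendsto_nhdsWithin_iff.2 ⟨tendsto_iff_dist_tendsto_zero.2 ?_, ?_⟩
    · have h0 : Tendsto (fun t : ℝ => t * dist (γ 0) (γ 1)) (𝓝[>] 0)
          (𝓝 (0 * dist (γ 0) (γ 1))) :=
        (Continuous.tendsto (by fun_prop) 0).mono_left nhdsWithin_le_nhds
      rw [zero_mul] at h0
      refine h0.congr' ?_
      filter_upwards [Ioc_mem_nhdsGT zero_lt_one] with t ht using (hdist t ht).symm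
    · filter_upwards [Ioc_mem_nhdsGT zero_lt_one] with t ht
      refine dist_pos.1 ?_
      rw [hdist t ht]
      exact mul_pos ht.1 hD
  have hquot : Tendsto (fun t => ((E (γ 0)).toReal - (E (γ 1)).toReal) / dist (γ 0) (γ 1)
      + lam / 2 * (1 - t) * dist (γ 0) (γ 1)) (𝓝[>] 0)
      (𝓝 (((E (γ 0)).toReal - (E (γ 1)).toReal) / dist (γ 0) (γ 1)
        + lam / 2 * (1 - 0) * dist (γ 0) (γ 1))) :=
    (Continuous.tendsto (by fun_prop) 0).mono_left nhdsWithin_le_nhds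
  rw [sub_zero, mul_one] at hquot
  refine le_of_tendsto hquot ?_
  filter_upwards [hγlim.eventually (eventually_lt_of_limsup_lt hlt),
    Ioc_mem_nhdsGT zero_lt_one] with t hlt_t ht
  exact (hconv.le_sub_div_dist hbot hγ hy hz hyz ht).trans
    ((ENNReal.ofReal_lt_ofReal_iff hc).1 hlt_t).le

/-- Comparison for the differential inequality `f f' ≤ S f - lam f²`, with `f` nonnegative and
absolutely continuous. -/
theorem exp_mul_le_of_deriv_sq_le {f : ℝ → ℝ} {a b S lam : ℝ} (hab : a ≤ b) (hS : 0 ≤ S)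
    (hf0 : ∀ t, 0 ≤ f t) (hf : AbsolutelyContinuousOnInterval f a b)
    (hder : ∀ᵐ t, t ∈ Icc a b → ∃ d' : ℝ, HasDerivAt (fun s => f s ^ 2 / 2) d' t ∧
      d' ≤ S * f t - lam * f t ^ 2) :
    Real.exp (lam * b) * f b
      ≤ Real.exp (lam * a) * f a + S * ∫ t in a..b, Real.exp (lam * t) := by
  have hexp : AbsolutelyContinuousOnInterval (fun t => Real.exp (lam * t)) a b :=
    ContDiffOn.absolutelyContinuousOnInterval (by fun_prop)
  have hp := hexp.fun_mul hf
  have hle : ∫ t in a..b, deriv (fun t => Real.exp (lam * t) * f t) t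
      ≤ ∫ t in a..b, S * Real.exp (lam * t) := by
    refine intervalIntegral.integral_mono_ae_restrict hab hp.intervalIntegrable_deriv
      (Continuous.intervalIntegrable (by fun_prop) _ _) ?_
    rw [EventuallyLE, ae_restrict_iff' measurableSet_Icc]
    filter_upwards [hder, hf.ae_differentiableAt] with t ht hdiff hmem
    obtain ⟨d', hd', hd'le⟩ := ht hmem
    have hft := (hdiff (by rwa [uIcc_of_le hab])).hasDerivAt
    have hd'eq : d' = f t * deriv f t := by
      refine hd'.unique (((hft.pow 2).div_const 2).congr_deriv ?_)
      simp
      ring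
    have hf' : deriv f t ≤ S - lam * f t := by
      rcases (hf0 t).eq_or_lt with h0 | hpos
      · have hmin : IsLocalMin f t := Eventually.of_forall fun s => h0 ▸ hf0 s
        rw [hmin.deriv_eq_zero, ← h0]
        simpa using hS
      · refine le_of_mul_le_mul_left ?_ hpos
        rw [← hd'eq]
        linarith
    have hpt : HasDerivAt (fun t => Real.exp (lam * t) * f t)
        (Real.exp (lam * t) * lam * f t + Real.exp (lam * t) * deriv f t) t := by
      refine HasDerivAt.mul ?_ hft
      simpa using ((hasDerivAt_id t).const_mul lam).exp
    rw [hpt.deriv]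
    have := mul_le_mul_of_nonneg_left hf' (Real.exp_pos (lam * t)).le
    linarith
  rw [hp.integral_deriv_eq_sub, intervalIntegral.integral_const_mul] at hle
  linarith

/-- **Distance estimate from the starting point along a gradient flow**: if
`y ∈ D(|∂⁻E|)` then `d(y, y_h) ≤ |∂⁻E|(y)·∫₀^h e^{−λt} dt` for every `h > 0`. -/
theorem gradientFlow_dist_from_start {Y : Type*} [MetricSpace Y] [CompleteSpace Y]
    (hY : Cat0 Y) (lam : ℝ) (E : Y → EReal) (hbot : ∀ y, E y ≠ ⊥)
    (hconv : LamConvex lam E) (hlsc : LowerSemicontinuous E)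
    (y : Y) (hsl : descendingSlope E y ≠ ⊤)
    (ytraj : ℝ → Y) (hgf : GradientFlow lam E y ytraj) (h : ℝ) (hh : 0 < h) :
    dist y (ytraj h) ≤
      (descendingSlope E y).toReal * ∫ t in (0:ℝ)..h, Real.exp (-lam * t) := by
  obtain ⟨hac, hlim, hevi⟩ := hgf
  have hy : E y ≠ ⊤ := fun h => hsl (by simp [descendingSlope, h])
  set S := (descendingSlope E y).toReal
  have hstep : ∀ a ∈ Ioc 0 h, Real.exp (lam * h) * dist (ytraj h) y
      ≤ Real.exp (lam * a) * dist (ytraj a) y + S * ∫ t in a..h, Real.exp (lam * t) := by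
    intro a ha
    refine exp_mul_le_of_deriv_sq_le (f := fun t => dist (ytraj t) y) ha.2 ENNReal.toReal_nonneg
      (fun _ => dist_nonneg) (((hac a h ha.1 ha.2).absolutelyContinuousOnInterval ha.2).of_dist_le
        fun s _ t _ => dist_dist_dist_le_left _ _ _) ?_
    filter_upwards [(ae_restrict_iff' measurableSet_Ioi).1 (hevi y)] with t ht hmem
    obtain ⟨d', hd', hle⟩ := ht (ha.1.trans_le hmem.1)
    refine ⟨d', hd', ?_⟩
    rw [← EReal.coe_toReal hy (hbot _)] at hle
    have htop : E (ytraj t) ≠ ⊤ := fun h => by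
      rw [h, EReal.coe_add_top, EReal.top_add_coe, top_le_iff] at hle
      exact EReal.coe_ne_top _ hle
    rw [← EReal.coe_toReal htop (hbot _)] at hle
    norm_cast at hle
    have := hconv.sub_le_descendingSlope hY.1 hbot hsl htop
    rw [dist_comm y] at this
    linarith
  have hprim : Tendsto (fun a => ∫ t in a..h, Real.exp (lam * t)) (𝓝[>] 0)
      (𝓝 (∫ t in (0 : ℝ)..h, Real.exp (lam * t))) := by
    simp_rw [intervalIntegral.integral_symm h]
    exact ((intervalIntegral.continuous_primitive (fun _ _ =>
      Continuous.intervalIntegrable (by fun_prop) _ _) h).neg.tendsto 0).mono_left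
        nhdsWithin_le_nhds
  have hdist : Tendsto (fun a => Real.exp (lam * a) * dist (ytraj a) y) (𝓝[>] 0) (𝓝 0) := by
    have h1 : Tendsto (fun a => Real.exp (lam * a)) (𝓝[>] 0) (𝓝 (Real.exp (lam * 0))) :=
      (Continuous.tendsto (by fun_prop) 0).mono_left nhdsWithin_le_nhds
    simpa using h1.mul (hlim.dist (tendsto_const_nhds (x := y)))
  have hmain : Real.exp (lam * h) * dist (ytraj h) y
      ≤ S * ∫ t in (0 : ℝ)..h, Real.exp (lam * t) := by
    refine ge_of_tendsto (by simpa using hdist.add (hprim.const_mul S)) ?_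
    filter_upwards [Ioc_mem_nhdsGT hh] with a ha using hstep a ha
  have hint : ∫ t in (0 : ℝ)..h, Real.exp (lam * t)
      = Real.exp (lam * h) * ∫ t in (0 : ℝ)..h, Real.exp (-lam * t) := by
    have := intervalIntegral.integral_comp_sub_left (a := 0) (b := h)
      (fun t => Real.exp (lam * t)) h
    rw [sub_self, sub_zero] at this
    rw [← this, ← intervalIntegral.integral_const_mul]
    congr 1 with t
    rw [← Real.exp_add]
    ring_nf
  rw [hint, mul_left_comm] at hmain
  rw [dist_comm]
  exact le_of_mul_le_mul_left hmain (Real.exp_pos _)
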